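/- arXiv:1811.09774 — 2 statements merged into one kernel-verified Lean document; each statement's English description precedes it below -/
import Mathlib

section
/- Let m ≥ 2 and set f_j = A_j/z₁ ∈ K = Frac(R) for j ∈ {1, …, m−2, m}. Then ι_{V_{m+1}} ι_{V_m} ι_{V₁} ι_{V₂} ⋯ ι_{V_{m−1}} ( (z₁ A₁ A₂ ⋯ A_{m−2} A_m)^{−1} Ω ) = dlog f₁ ∧ dlog f₂ ∧ ⋯ ∧ dlog f_{m−2} ∧ dlog f_m in ⋀^{m−1}_K Ω_{K/ℂ}. (This is Proposition 3.8 of the paper: the contraction of the meromorphic volume form with simple poles along the Schubert anticanonical divisor of the even quadric Q_{2m}.) -/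
set_option synthInstance.maxHeartbeats 1000000
set_option maxHeartbeats 1000000

noncomputable section

open MvPolynomial

/-- The coordinate ring `R = ℂ[z₂, z₃, …, z_{2m+1}]` of the affine chart
`{x₀ ≠ 0}` of the even quadric `Q_{2m}`. -/
abbrev QevR (m : ℕ) := MvPolynomial {j : ℕ // 2 ≤ j ∧ j ≤ 2 * m + 1} ℂ

/-- The fraction field `K = Frac(R)`. -/
abbrev QevK (m : ℕ) := FractionRing (QevR m)

/-- The coordinate `z_j` for `2 ≤ j ≤ 2m+1`. -/
def qevZ (m j : ℕ) : QevR m :=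
  if h : 2 ≤ j ∧ j ≤ 2 * m + 1 then X ⟨j, h⟩ else 0

/-- `A_j = z_{2j} z_{2j+1}` for `1 ≤ j ≤ m`. -/
def qevA (m j : ℕ) : QevR m := qevZ m (2 * j) * qevZ m (2 * j + 1)

/-- `z₁ = −(z₂z₃ + z₄z₅ + ⋯ + z_{2m}z_{2m+1})` (the quadric relation solved
for `z₁`). -/
def qevZ1 (m : ℕ) : QevR m := -(∑ i ∈ Finset.Icc 1 m, qevA m i)

/-- The ℂ-derivations `V_j = z_{2j}∂/∂z_{2j} − z_{2j+1}∂/∂z_{2j+1}` for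
`1 ≤ j ≤ m−1`, `V_m = z_{2m}∂/∂z_{2m} + ∑_{i=1}^{m−1} z_{2i+1}∂/∂z_{2i+1}` and
`V_{m+1} = z_{2m+1}∂/∂z_{2m+1} + ∑_{i=1}^{m−1} z_{2i+1}∂/∂z_{2i+1}`. -/
def qevV (m i : ℕ) : Derivation ℂ (QevR m) (QevR m) :=
  if i = m then
    MvPolynomial.mkDerivation ℂ (fun s =>
      if s.1 = 2 * m then qevZ m s.1
      else if s.1 % 2 = 1 ∧ s.1 ≤ 2 * m - 1 then qevZ m s.1 else 0)
  else if i = m + 1 then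
    MvPolynomial.mkDerivation ℂ (fun s =>
      if s.1 = 2 * m + 1 then qevZ m s.1
      else if s.1 % 2 = 1 ∧ s.1 ≤ 2 * m - 1 then qevZ m s.1 else 0)
  else
    MvPolynomial.mkDerivation ℂ (fun s =>
      if s.1 = 2 * i then qevZ m s.1
      else if s.1 = 2 * i + 1 then -(qevZ m s.1) else 0)

/-- Contraction (interior product) of `⋀_A Ω_{A/ℂ}` by the `A`-linear functional
`Ω_{A/ℂ} → A` determined by `dg ↦ V g`, for a ℂ-derivation `V` of `A`. -/
def contrDer {A : Type} [CommRing A] [Algebra ℂ A] (V : Derivation ℂ A A) :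
    ExteriorAlgebra A (Ω[A⁄ℂ]) →ₗ[A] ExteriorAlgebra A (Ω[A⁄ℂ]) :=
  CliffordAlgebra.contractLeft ((KaehlerDifferential.linearMapEquivDerivation ℂ A).symm V)

/-- `Ω = dz₂∧dz₃∧⋯∧dz_{2m+1} ∈ ⋀^{2m}_R Ω_{R/ℂ}`. -/
def qevOmega (m : ℕ) : ExteriorAlgebra (QevR m) (Ω[QevR m⁄ℂ]) :=
  (((List.Ico 2 (2 * m + 2)).map (fun j =>
    ExteriorAlgebra.ι (QevR m) (KaehlerDifferential.D ℂ (QevR m) (qevZ m j)))).prod)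

/-- `dlog f = f⁻¹ df ∈ Ω_{K/ℂ}`. -/
def dlog (m : ℕ) (f : QevK m) : Ω[QevK m⁄ℂ] :=
  f⁻¹ • KaehlerDifferential.D ℂ (QevK m) f

/-- The image of `A_j` in `K`. -/
def qevAK (m j : ℕ) : QevK m := algebraMap (QevR m) (QevK m) (qevA m j)

/-- The image of `z₁` in `K`. -/
def qevZ1K (m : ℕ) : QevK m := algebraMap (QevR m) (QevK m) (qevZ1 m)

/-- `Ω = dz₂∧dz₃∧⋯∧dz_{2m+1}`, viewed in `⋀_K Ω_{K/ℂ}`. -/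
def qevOmegaK (m : ℕ) : ExteriorAlgebra (QevK m) (Ω[QevK m⁄ℂ]) :=
  (((List.Ico 2 (2 * m + 2)).map (fun j =>
    ExteriorAlgebra.ι (QevK m)
      (KaehlerDifferential.D ℂ (QevK m) (algebraMap (QevR m) (QevK m) (qevZ m j))))).prod)

section core
variable {K M : Type*} [Field K] [AddCommGroup M] [Module K M]

local notation "ct" => CliffordAlgebra.contractLeft (Q := (0 : QuadraticForm K M))
local notation "ee" => ExteriorAlgebra.ι K (M := M)

theorem qh_ct_ι_mul (d : Module.Dual K M) (a : M) (w : ExteriorAlgebra K M) :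
    ct d (ee a * w) = d a • w - ee a * ct d w :=
  CliffordAlgebra.contractLeft_ι_mul d a w

theorem qh_ct_prod (d : Module.Dual K M) (L : List M) (w : ExteriorAlgebra K M) :
    ct d ((L.map ee).prod * w) =
      ct d (L.map ee).prod * w + ((-1 : K) ^ L.length) • ((L.map ee).prod * ct d w) := by
  induction L with
  | nil => simp [CliffordAlgebra.contractLeft_one]
  | cons a L ih =>
    simp only [List.map_cons, List.prod_cons, List.length_cons, mul_assoc]
    rw [qh_ct_ι_mul, qh_ct_ι_mul, ih]
    simp only [mul_add, sub_mul, smul_mul_assoc, mul_smul_comm, mul_assoc, pow_succ]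
    module

theorem qh_ct_prod_zero (d : Module.Dual K M) (L : List M) (h : ∀ a ∈ L, d a = 0) :
    ct d (L.map ee).prod = 0 := by
  induction L with
  | nil => simp [CliffordAlgebra.contractLeft_one]
  | cons a L ih =>
    simp only [List.map_cons, List.prod_cons]
    rw [qh_ct_ι_mul, ih (fun b hb => h b (List.mem_cons_of_mem _ hb)), h a List.mem_cons_self]
    simp

theorem qh_swap (a b : M) : ee a * ee b = - (ee b * ee a) := by
  have := ExteriorAlgebra.ι_add_mul_swap (R := K) a b
  exact eq_neg_of_add_eq_zero_left this

theorem qh_prod_comm (L : List M) (s : M) :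
    ee s * (L.map ee).prod = ((-1 : K) ^ L.length) • ((L.map ee).prod * ee s) := by
  induction L with
  | nil => simp
  | cons a L ih =>
    simp only [List.map_cons, List.prod_cons, List.length_cons]
    rw [← mul_assoc, qh_swap, neg_mul, mul_assoc, ih]
    simp only [mul_smul_comm, mul_assoc, pow_succ]
    module

theorem qh_prod_sq (L : List M) (s : M) : ee s * ((L.map ee).prod * ee s) = 0 := by
  rw [← mul_assoc, qh_prod_comm, smul_mul_assoc, mul_assoc, ExteriorAlgebra.ι_sq_zero]
  simp

theorem qh_prod_mem (L : List M) (v : M) (h : v ∈ L) : (L.map ee).prod * ee v = 0 := by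
  induction L with
  | nil => simp at h
  | cons a L ih =>
    simp only [List.map_cons, List.prod_cons]
    rcases List.mem_cons.1 h with rfl | h
    · rw [mul_assoc, qh_prod_sq]
    · rw [mul_assoc, ih h, mul_zero]

theorem qh_prod_wedge (L : List ℕ) (a b : ℕ → M) (c t : ℕ → K) (s : M)
    (h : ∀ k ∈ L, a k = c k • b k + t k • s) :
    ((L.map a).map ee).prod * ee s = (L.map c).prod • (((L.map b).map ee).prod * ee s) := by
  induction L with
  | nil => simp
  | cons k L ih =>
    simp only [List.map_cons, List.prod_cons]
    rw [mul_assoc, ih (fun j hj => h j (List.mem_cons_of_mem _ hj)), h k List.mem_cons_self]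
    rw [map_add, map_smul, map_smul, mul_smul_comm, add_mul, smul_mul_assoc, smul_mul_assoc,
      qh_prod_sq, mul_assoc]
    module

theorem qh_foldr_pass (l : List ℕ) (d : ℕ → Module.Dual K M) (x y : M)
    (h : ∀ i ∈ l, d i x = 0 ∧ d i y = 0) (w : ExteriorAlgebra K M) :
    l.foldr (fun i ω => ct (d i) ω) (ee x * ee y * w) =
      ee x * ee y * l.foldr (fun i ω => ct (d i) ω) w := by
  induction l with
  | nil => rfl
  | cons i l ih =>
    simp only [List.foldr_cons]
    rw [ih (fun j hj => h j (List.mem_cons_of_mem _ hj)), mul_assoc, qh_ct_ι_mul, qh_ct_ι_mul,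
      (h i List.mem_cons_self).1, (h i List.mem_cons_self).2]
    simp [mul_assoc]

theorem qh_foldr_pairs (l : List ℕ) (hl : l.Nodup) (d : ℕ → Module.Dual K M) (x y : ℕ → M)
    (h : ∀ i ∈ l, ∀ k ∈ l, k ≠ i → d i (x k) = 0 ∧ d i (y k) = 0)
    (w : ExteriorAlgebra K M) (hw : ∀ i ∈ l, ct (d i) w = 0) :
    l.foldr (fun i ω => ct (d i) ω) ((l.map (fun k => ee (x k) * ee (y k))).prod * w) =
      ((l.map (fun k => d k (x k) • y k - d k (y k) • x k)).map ee).prod * w := by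
  induction l with
  | nil => rfl
  | cons j l ih =>
    have hj : j ∉ l := (List.nodup_cons.1 hl).1
    simp only [List.foldr_cons, List.map_cons, List.prod_cons]
    rw [mul_assoc (ee (x j) * ee (y j)), qh_foldr_pass, ih (List.nodup_cons.1 hl).2, mul_assoc,
      qh_ct_ι_mul, qh_ct_ι_mul, qh_ct_prod, qh_ct_prod_zero, hw j List.mem_cons_self]
    · simp [sub_mul, mul_assoc]
    · intro v hv
      obtain ⟨k, hk, rfl⟩ := List.mem_map.1 hv
      have := h j List.mem_cons_self k (List.mem_cons_of_mem _ hk) (fun e => hj (e ▸ hk))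
      simp [this.1, this.2]
    · exact fun i hi k hk => h i (List.mem_cons_of_mem _ hi) k (List.mem_cons_of_mem _ hk)
    · exact fun i hi => hw i (List.mem_cons_of_mem _ hi)
    · exact fun i hi => h i (List.mem_cons_of_mem _ hi) j List.mem_cons_self
        (fun e => hj (e ▸ hi))

/-- the last two contractions -/
theorem qh_last (d d' : Module.Dual K M) (L : List M) (x y : M) (X Y : K)
    (h : ∀ a ∈ L, d a = d' a) (hx : d x = X) (hy : d y = 0) (hx' : d' x = 0) (hy' : d' y = Y) :
    ct d' (ct d ((L.map ee).prod * (ee x * ee y))) =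
      ((-1 : K) ^ L.length) • ct d ((L.map ee).prod * ee (X • y + Y • x)) := by
  have e : ∀ L : List M, (∀ a ∈ L, d a = d' a) → ct d (L.map ee).prod = ct d' (L.map ee).prod := by
    intro L h
    induction L with
    | nil => simp [CliffordAlgebra.contractLeft_one]
    | cons a L ih =>
      simp only [List.map_cons, List.prod_cons]
      rw [qh_ct_ι_mul, qh_ct_ι_mul, ih (fun b hb => h b (List.mem_cons_of_mem _ hb)),
        h a List.mem_cons_self]
  -- contraction of (ct d P) * w
  have e2 : ∀ (L : List M) (w : ExteriorAlgebra K M), 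
      ct d' (ct d' (L.map ee).prod * w) =
      -((-1 : K) ^ L.length) • (ct d' (L.map ee).prod * ct d' w) := by
    intro L w
    have h1 := congrArg (ct d') (qh_ct_prod d' L w)
    rw [CliffordAlgebra.contractLeft_contractLeft, map_add, map_smul, qh_ct_prod,
      CliffordAlgebra.contractLeft_contractLeft] at h1
    rw [mul_zero, smul_zero, add_zero] at h1
    rw [eq_neg_of_add_eq_zero_left h1.symm, neg_smul]
  have hι : ∀ (f : Module.Dual K M) (v : M), ct f (ee v) = algebraMap K _ (f v) :=
    fun f v => CliffordAlgebra.contractLeft_ι _ _ _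
  have s1 : ((-1 : K) ^ L.length) * ((-1 : K) ^ L.length) = 1 := by
    rw [← mul_pow]; simp
  have hd : d (X • y + Y • x) = Y * X := by simp [hx, hy]
  rw [qh_ct_prod, e L h, map_add, map_smul, e2, qh_ct_ι_mul, qh_ct_ι_mul, hι, hι, hx, hy, hx', hy',
    map_zero, mul_zero, sub_zero, mul_smul_comm, map_smul, qh_ct_prod, qh_ct_prod, hι, hι, hy', hd,
    map_add, map_smul, map_smul, e L h]
  simp only [Algebra.algebraMap_eq_smul_one, zero_smul, zero_sub, mul_neg, mul_smul_comm, mul_one,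
    mul_add, smul_add, smul_smul, smul_neg, neg_mul, neg_smul, neg_neg]
  match_scalars <;> linear_combination (0 : K) * s1

theorem qh_foldr_smul (l : List ℕ) (d : ℕ → Module.Dual K M) (c : K) (w : ExteriorAlgebra K M) :
    l.foldr (fun i ω => ct (d i) ω) (c • w) = c • l.foldr (fun i ω => ct (d i) ω) w := by
  induction l with
  | nil => rfl
  | cons i l ih => simp only [List.foldr_cons]; rw [ih, map_smul]

theorem qh_repl (n : ℕ) (a : ℕ → M) (s : M) (hs : s = ∑ k ∈ Finset.Icc 1 (n + 2), a k) :
    (((List.Ico 1 (n + 2)).map a).map ee).prod * ee (a (n + 2)) =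
      - ((((List.Ico 1 (n + 1) ++ [n + 2]).map a).map ee).prod * ee s) := by
  have hI : List.Ico 1 (n + 2) = List.Ico 1 (n + 1) ++ [n + 1] := by
    rw [List.Ico.succ_top (by omega)]
  have h1 : ∀ k ∈ Finset.Icc 1 (n + 2), k ≠ n + 1 → 
      (((List.Ico 1 (n + 1) ++ [n + 2]).map a).map ee).prod * ee (a k) = 0 := by
    intro k hk hk'
    apply qh_prod_mem
    apply List.mem_map_of_mem
    simp only [Finset.mem_Icc] at hk
    simp only [List.mem_append, List.Ico.mem, List.mem_singleton]
    omega
  rw [hs, map_sum, Finset.mul_sum, Finset.sum_eq_single (n + 1) h1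
    (fun h => absurd (Finset.mem_Icc.2 (by omega)) h), hI]
  simp only [List.map_append, List.prod_append, List.map_cons, List.map_nil, List.prod_singleton]
  rw [mul_assoc, mul_assoc, qh_swap, mul_neg]

theorem qh_core (n : ℕ) (d : ℕ → Module.Dual K M) (x y b : ℕ → M) (X Y t : ℕ → K) (z : K)
    (hd1 : ∀ i k, 1 ≤ i → i < n + 2 → 1 ≤ k → k ≤ n + 2 →
      d i (x k) = (if k = i then X k else 0) ∧ d i (y k) = if k = i then - Y k else 0)
    (hd2 : ∀ k, 1 ≤ k → k ≤ n + 2 →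
      d (n + 2) (x k) = (if k = n + 2 then X k else 0) ∧
      d (n + 2) (y k) = if k = n + 2 then 0 else Y k)
    (hd3 : ∀ k, 1 ≤ k → k ≤ n + 2 →
      d (n + 3) (x k) = 0 ∧ d (n + 3) (y k) = Y k)
    (hb : ∀ k, 1 ≤ k → k ≤ n + 2 → X k • y k + Y k • x k =
      (X k * Y k) • b k + t k • ∑ k ∈ Finset.Icc 1 (n + 2), (X k • y k + Y k • x k))
    (hb0 : ∀ k, 1 ≤ k → k ≤ n + 2 → d (n + 2) (b k) = 0)
    (hz : z = - ∑ k ∈ Finset.Icc 1 (n + 2), X k * Y k) (hz0 : z ≠ 0)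
    (hX : ∀ k, 1 ≤ k → k ≤ n + 2 → X k * Y k ≠ 0) :
    ((n + 3) :: (n + 2) :: List.Ico 1 (n + 2)).foldr (fun i ω => ct (d i) ω)
        (((z * (∏ k ∈ Finset.Icc 1 n, X k * Y k) * (X (n + 2) * Y (n + 2)))⁻¹) •
          ((List.Ico 1 (n + 3)).map (fun k => ee (x k) * ee (y k))).prod) =
      ((List.Ico 1 (n + 1)).map (fun k => ee (b k))).prod * ee (b (n + 2)) := by
  set a : ℕ → M := fun k => X k • y k + Y k • x k with ha
  set s : M := ∑ k ∈ Finset.Icc 1 (n + 2), a k with hs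
  have hI : List.Ico 1 (n + 3) = List.Ico 1 (n + 2) ++ [n + 2] := by
    rw [List.Ico.succ_top (by omega)]
  have hmem : ∀ i, i ∈ List.Ico 1 (n + 2) → 1 ≤ i ∧ i < n + 2 := fun i hi => List.Ico.mem.1 hi
  have hda : ∀ k, 1 ≤ k → k ≤ n + 2 → d (n + 2) (a k) = X k * Y k := by
    intro k h1 h2
    simp only [ha, map_add, map_smul, (hd2 k h1 h2).1, (hd2 k h1 h2).2]
    split_ifs <;> simp [mul_comm]
  have hds : d (n + 2) s = - z := by
    rw [hs, map_sum, hz, neg_neg]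
    exact Finset.sum_congr rfl fun k hk => hda k (Finset.mem_Icc.1 hk).1 (Finset.mem_Icc.1 hk).2
  rw [qh_foldr_smul, List.foldr_cons, List.foldr_cons, hI, List.map_append, List.prod_append,
    List.map_singleton, List.prod_singleton, qh_foldr_pairs]
  rotate_left
  · exact List.Ico.nodup _ _
  · intro i hi k hk hne
    have := hd1 i k (hmem i hi).1 (hmem i hi).2 (hmem k hk).1 (hmem k hk).2.le
    simpa [hne] using this
  · intro i hi
    have := hd1 i (n + 2) (hmem i hi).1 (hmem i hi).2 (by omega) le_rfl
    have hne : n + 2 ≠ i := (hmem i hi).2.ne'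
    simp only [hne, if_false] at this
    have h2 := qh_ct_prod_zero (d i) [x (n + 2), y (n + 2)] (by simp [this.1, this.2])
    simpa using h2
  have hmap : (List.Ico 1 (n + 2)).map (fun k => d k (x k) • y k - d k (y k) • x k) =
      (List.Ico 1 (n + 2)).map a := by
    apply List.map_congr_left
    intro k hk
    have := hd1 k k (hmem k hk).1 (hmem k hk).2 (hmem k hk).1 (hmem k hk).2.le
    simp [this.1, this.2, ha]
  have hL : ∀ v ∈ (List.Ico 1 (n + 2)).map a, d (n + 2) v = d (n + 3) v := by
    intro v hv
    obtain ⟨k, hk, rfl⟩ := List.mem_map.1 hv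
    have h1 := (hmem k hk).1
    have h2 := (hmem k hk).2
    rw [hda k h1 h2.le]
    simp [ha, hd3 k h1 h2.le]
  have q2 := hd2 (n + 2) (by omega) le_rfl
  have q3 := hd3 (n + 2) (by omega) le_rfl
  simp only [if_true] at q2
  rw [hmap, qh_last (d (n + 2)) (d (n + 3)) _ _ _ (X (n + 2)) (Y (n + 2)) hL q2.1 q2.2 q3.1 q3.2]
  have hr := qh_repl (K := K) n a s hs
  have ha2 : X (n + 2) • y (n + 2) + Y (n + 2) • x (n + 2) = a (n + 2) := rfl
  have hmem' : ∀ k ∈ List.Ico 1 (n + 1) ++ [n + 2], 1 ≤ k ∧ k ≤ n + 2 := by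
    intro k hk
    simp only [List.mem_append, List.Ico.mem, List.mem_singleton] at hk
    omega
  rw [ha2, hr, qh_prod_wedge _ a b (fun k => X k * Y k) t s
    (fun k hk => hb k (hmem' k hk).1 (hmem' k hk).2), map_neg, map_smul, qh_ct_prod,
    qh_ct_prod_zero, CliffordAlgebra.contractLeft_ι, hds]
  rotate_left
  · intro v hv
    obtain ⟨k, hk, rfl⟩ := List.mem_map.1 hv
    exact hb0 k (hmem' k hk).1 (hmem' k hk).2
  have hprod : ((List.Ico 1 (n + 1) ++ [n + 2]).map (fun k => X k * Y k)).prod =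
      (∏ k ∈ Finset.Icc 1 n, X k * Y k) * (X (n + 2) * Y (n + 2)) := by
    rw [List.map_append, List.prod_append, List.map_singleton, List.prod_singleton]
    rfl
  have hp0 : (∏ k ∈ Finset.Icc 1 n, X k * Y k) ≠ 0 :=
    Finset.prod_ne_zero_iff.2 fun k hk =>
      hX k (Finset.mem_Icc.1 hk).1 ((Finset.mem_Icc.1 hk).2.trans (by omega))
  have hx2 := hX (n + 2) (by omega) le_rfl
  rw [hprod]
  simp only [List.length_map, List.length_append, List.Ico.length, List.length_singleton,
    List.map_map, zero_mul, zero_add, Algebra.algebraMap_eq_smul_one, mul_smul_comm, mul_one]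
  have hB : ((List.Ico 1 (n + 1) ++ [n + 2]).map (ee ∘ b)).prod =
      ((List.Ico 1 (n + 1)).map (fun k => ee (b k))).prod * ee (b (n + 2)) := by
    simp [List.map_append, List.prod_append, Function.comp_def]
  rw [hB]
  have e1 : n + 2 - 1 = n + 1 := rfl
  have e2 : n + 1 - 1 = n := rfl
  rw [e1, e2]
  generalize ((List.Ico 1 (n + 1)).map (fun k => ee (b k))).prod * ee (b (n + 2)) = B
  have s1 : ((-1 : K) ^ (n + 1)) * ((-1 : K) ^ (n + 1)) = 1 := by
    rw [← mul_pow]; simp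
  generalize ((-1 : K) ^ (n + 1)) = e at s1
  generalize (∏ k ∈ Finset.Icc 1 n, X k * Y k) = p at *
  generalize X (n + 2) * Y (n + 2) = q at *
  match_scalars
  field_simp
  linear_combination s1

theorem qh_pairs {N : Type*} [Monoid N] (g : ℕ → N) (n : ℕ) :
    ((List.Ico 2 (2 * n + 2)).map g).prod =
      ((List.Ico 1 (n + 1)).map (fun k => g (2 * k) * g (2 * k + 1))).prod := by
  induction n with
  | zero => simp
  | succ n ih =>
    rw [show 2 * (n + 1) + 2 = (2 * n + 2) + 1 + 1 by ring, List.Ico.succ_top (by omega),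
      List.Ico.succ_top (by omega), List.Ico.succ_top (n := 1) (by omega)]
    simp only [List.map_append, List.prod_append, ih, List.map_singleton, List.prod_singleton,
      mul_assoc]
    rfl
end core

theorem qh_Z (m j : ℕ) (h : 2 ≤ j ∧ j ≤ 2 * m + 1) : qevZ m j = X ⟨j, h⟩ := by
  simp [qevZ, h]

theorem qh_Z_ne (m j : ℕ) (h : 2 ≤ j ∧ j ≤ 2 * m + 1) : qevZ m j ≠ 0 := by
  rw [qh_Z m j h]; exact X_ne_zero _

theorem qh_Z1_ne (m : ℕ) (hm : 2 ≤ m) : qevZ1 m ≠ 0 := by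
  intro h
  have h2 := congrArg (MvPolynomial.eval (fun s => if s.1 ≤ 3 then (1 : ℂ) else 0)) h
  rw [qevZ1, map_neg, map_sum, Finset.sum_eq_single 1] at h2
  · simp [qevA, qh_Z m 2 (by omega), qh_Z m 3 (by omega)] at h2
  · intro k hk hk1
    have := Finset.mem_Icc.1 hk
    rw [qevA, qh_Z m (2 * k) (by omega), map_mul, eval_X, if_neg (by show ¬ (2 * k ≤ 3); omega),
      zero_mul]
  · intro h; exact absurd (Finset.mem_Icc.2 (by omega)) h

theorem qh_V1 (m i j : ℕ) (hi : i < m) (h : 2 ≤ j ∧ j ≤ 2 * m + 1) :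
    qevV m i (qevZ m j) =
      if j = 2 * i then qevZ m j else if j = 2 * i + 1 then -(qevZ m j) else 0 := by
  rw [qevV, if_neg (by omega), if_neg (by omega), qh_Z m j h, mkDerivation_X, qh_Z m j h]

theorem qh_V2 (m j : ℕ) (h : 2 ≤ j ∧ j ≤ 2 * m + 1) :
    qevV m m (qevZ m j) =
      if j = 2 * m then qevZ m j else if j % 2 = 1 ∧ j ≤ 2 * m - 1 then qevZ m j else 0 := by
  rw [qevV, if_pos rfl, qh_Z m j h, mkDerivation_X, qh_Z m j h]

theorem qh_V3 (m j : ℕ) (h : 2 ≤ j ∧ j ≤ 2 * m + 1) :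
    qevV m (m + 1) (qevZ m j) =
      if j = 2 * m + 1 then qevZ m j else if j % 2 = 1 ∧ j ≤ 2 * m - 1 then qevZ m j else 0 := by
  rw [qevV, if_neg (by omega), if_pos rfl, qh_Z m j h, mkDerivation_X, qh_Z m j h]

theorem qh_dlog_decomp (m : ℕ) (A z : QevK m) (hA : A ≠ 0) (hz : z ≠ 0) :
    KaehlerDifferential.D ℂ (QevK m) A = A • dlog m (A / z) +
      (A / z) • KaehlerDifferential.D ℂ (QevK m) z := by
  have h : A = (A / z) * z := by field_simp
  have h2 : KaehlerDifferential.D ℂ (QevK m) A =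
      (A / z) • KaehlerDifferential.D ℂ (QevK m) z +
        z • KaehlerDifferential.D ℂ (QevK m) (A / z) := by
    conv_lhs => rw [h]
    rw [Derivation.leibniz]
  have h3 : A * (A / z)⁻¹ = z := by field_simp
  rw [dlog, smul_smul, h3, h2]
  exact add_comm _ _

theorem qh_W_div (m : ℕ) (W : Derivation ℂ (QevK m) (QevK m)) (A z : QevK m) (hz : z ≠ 0)
    (h1 : W A = A) (h2 : W z = z) : W (A / z) = 0 := by
  have h : A = (A / z) * z := by field_simp
  have h3 : W A = (A / z) • W z + z • W (A / z) := by
    conv_lhs => rw [h]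
    rw [Derivation.leibniz]
  rw [h1, h2, smul_eq_mul, ← h, smul_eq_mul] at h3
  have h4 : z * W (A / z) = 0 := by linear_combination -h3
  exact (mul_eq_zero.1 h4).resolve_left hz

/-- Proposition 3.8 of the paper: with `f_j = A_j/z₁` for `j ∈ {1,…,m−2,m}`,
`ι_{V_{m+1}} ι_{V_m} ι_{V₁} ⋯ ι_{V_{m−1}} ((z₁A₁⋯A_{m−2}A_m)⁻¹ Ω)
 = dlog f₁ ∧ ⋯ ∧ dlog f_{m−2} ∧ dlog f_m`,
where the `ι_{V_i}` are the (unique) extensions of the derivations `V_i` to `K`. -/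
theorem qev_schubert_contraction (m : ℕ) (hm : 2 ≤ m)
    (W : ℕ → Derivation ℂ (QevK m) (QevK m))
    (hW : ∀ i, ∀ g : QevR m,
      W i (algebraMap (QevR m) (QevK m) g) = algebraMap (QevR m) (QevK m) (qevV m i g)) :
    ((m + 1) :: m :: List.Ico 1 m).foldr (fun i ω => contrDer (W i) ω)
        (((qevZ1K m * (∏ k ∈ Finset.Icc 1 (m - 2), qevAK m k) * qevAK m m)⁻¹) • qevOmegaK m) =
      (((List.Ico 1 (m - 1)).map (fun k =>
          ExteriorAlgebra.ι (QevK m) (dlog m (qevAK m k / qevZ1K m)))).prod) *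
        ExteriorAlgebra.ι (QevK m) (dlog m (qevAK m m / qevZ1K m)) := by
  obtain ⟨n, rfl⟩ : ∃ n, m = n + 2 := ⟨m - 2, by omega⟩
  set φ := algebraMap (QevR (n + 2)) (QevK (n + 2)) with hφ
  have hinj : Function.Injective φ := IsFractionRing.injective _ _
  have hne : ∀ g : QevR (n + 2), g ≠ 0 → φ g ≠ 0 := fun g hg h =>
    hg (hinj (h.trans (map_zero φ).symm))
  set d : ℕ → Module.Dual (QevK (n + 2)) (Ω[QevK (n + 2)⁄ℂ]) := fun i =>
    (KaehlerDifferential.linearMapEquivDerivation ℂ (QevK (n + 2))).symm (W i) with hd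
  have hdD : ∀ i g, d i (KaehlerDifferential.D ℂ (QevK (n + 2)) g) = W i g := fun i g =>
    Derivation.liftKaehlerDifferential_comp_D (W i) g
  have hA : ∀ k, 1 ≤ k → k ≤ n + 2 → qevAK (n + 2) k ≠ 0 := fun k h1 h2 =>
    hne _ (mul_ne_zero (qh_Z_ne _ _ (by omega)) (qh_Z_ne _ _ (by omega)))
  have hz : qevZ1K (n + 2) ≠ 0 := hne _ (qh_Z1_ne _ hm)
  have hAeq : ∀ k, qevAK (n + 2) k = φ (qevZ (n + 2) (2 * k)) * φ (qevZ (n + 2) (2 * k + 1)) :=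
    fun k => map_mul φ _ _
  have hzeq : qevZ1K (n + 2) = - ∑ k ∈ Finset.Icc 1 (n + 2), qevAK (n + 2) k := by
    simp only [qevZ1K, qevZ1, qevAK, map_neg, map_sum]
  have hDA : ∀ k, KaehlerDifferential.D ℂ (QevK (n + 2)) (qevAK (n + 2) k) =
      φ (qevZ (n + 2) (2 * k)) • KaehlerDifferential.D ℂ (QevK (n + 2)) (φ (qevZ (n + 2) (2 * k + 1)))
      + φ (qevZ (n + 2) (2 * k + 1)) •
        KaehlerDifferential.D ℂ (QevK (n + 2)) (φ (qevZ (n + 2) (2 * k))) := by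
    intro k; rw [hAeq, Derivation.leibniz]
  have hWA : ∀ k, 1 ≤ k → k ≤ n + 2 → W (n + 2) (qevAK (n + 2) k) = qevAK (n + 2) k := by
    intro k h1 h2
    rw [hAeq, Derivation.leibniz, hW, hW, qh_V2 _ _ (by omega), qh_V2 _ _ (by omega)]
    by_cases hk : k = n + 2
    · rw [if_neg (by omega), if_neg (by omega), if_pos (by omega)]
      simp [mul_comm]
    · rw [if_neg (by omega), if_pos (by omega), if_neg (by omega), if_neg (by omega)]
      simp
  have hWz : W (n + 2) (qevZ1K (n + 2)) = qevZ1K (n + 2) := by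
    rw [hzeq, map_neg, map_sum]
    exact congrArg _ (Finset.sum_congr rfl fun k hk =>
      hWA k (Finset.mem_Icc.1 hk).1 (Finset.mem_Icc.1 hk).2)
  have key := qh_core n d
    (fun k => KaehlerDifferential.D ℂ (QevK (n + 2)) (φ (qevZ (n + 2) (2 * k))))
    (fun k => KaehlerDifferential.D ℂ (QevK (n + 2)) (φ (qevZ (n + 2) (2 * k + 1))))
    (fun k => dlog (n + 2) (qevAK (n + 2) k / qevZ1K (n + 2)))
    (fun k => φ (qevZ (n + 2) (2 * k))) (fun k => φ (qevZ (n + 2) (2 * k + 1)))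
    (fun k => - (qevAK (n + 2) k / qevZ1K (n + 2))) (qevZ1K (n + 2))
    (by
      intro i k h1 h2 h3 h4
      simp only [hdD, hW]
      rw [qh_V1 _ _ _ h2 (by omega), qh_V1 _ _ _ h2 (by omega)]
      by_cases hk : k = i
      · rw [if_pos (by omega), if_pos hk, if_neg (by omega), if_pos (by omega), if_pos hk]
        simp
      · rw [if_neg (by omega), if_neg (by omega), if_neg hk, if_neg (by omega), if_neg (by omega),
          if_neg hk]
        simp)
    (by
      intro k h1 h2
      simp only [hdD, hW]
      rw [qh_V2 _ _ (by omega), qh_V2 _ _ (by omega)]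
      by_cases hk : k = n + 2
      · rw [if_pos (by omega), if_pos hk, if_neg (by omega), if_neg (by omega), if_pos hk]
        simp
      · rw [if_neg (by omega), if_neg (by omega), if_neg hk, if_neg (by omega), if_pos (by omega),
          if_neg hk]
        simp)
    (by
      intro k h1 h2
      simp only [hdD, hW]
      rw [qh_V3 _ _ (by omega), qh_V3 _ _ (by omega), if_neg (by omega), if_neg (by omega)]
      by_cases hk : k = n + 2
      · rw [if_pos (by omega)]
        simp
      · rw [if_neg (by omega), if_pos (by omega)]
        simp)
    (by
      intro k h1 h2
      have e := qh_dlog_decomp (n + 2) _ _ (hA k h1 h2) hz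
      have e3 : KaehlerDifferential.D ℂ (QevK (n + 2)) (qevZ1K (n + 2)) =
          - ∑ k ∈ Finset.Icc 1 (n + 2),
            KaehlerDifferential.D ℂ (QevK (n + 2)) (qevAK (n + 2) k) := by
        rw [hzeq, map_neg, map_sum]
      rw [e3] at e
      simp only [← hDA, ← hAeq]
      rw [neg_smul, ← smul_neg]
      exact e)
    (by
      intro k h1 h2
      simp only [dlog, map_smul, hdD]
      rw [qh_W_div _ _ _ _ hz (hWA k h1 h2) hWz, smul_zero])
    (by simp only [← hAeq]; exact hzeq)
    hz
    (by intro k h1 h2; simp only [← hAeq]; exact hA k h1 h2)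
  simp only [← hAeq] at key
  rw [qevOmegaK, qh_pairs]
  exact key

end
end

section
/- Let m ≥ 2 and define B_k = z₁ + Σ_{i=1}^{k} A_i ∈ R for 1 ≤ k ≤ m−2. Then for every j with 1 ≤ j ≤ m−1, one has in ⋀^{m−1}_K Ω_{K/ℂ}: ι_{V_{m+1}} ι_{V_m} ι_{V₁} ι_{V₂} ⋯ ι_{V_{m−1}} ( (z₁ A₁ ⋯ A_{j−1} · B_j B_{j+1} ⋯ B_{m−2} · A_m)^{−1} Ω ) = dlog g₁ ∧ ⋯ ∧ dlog g_{m−2} ∧ dlog g_m, where g_k = A_k/z₁ for 1 ≤ k ≤ j−1, g_k = B_k/z₁ for j ≤ k ≤ m−2, and g_m = A_m/z₁. (This is Proposition 3.9 of the paper; j = m−1 recovers the Schubert case and j = 1 the Rietsch case for the even quadric Q_{2m}.) -/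
set_option synthInstance.maxHeartbeats 1000000
set_option maxHeartbeats 1000000

noncomputable section

open MvPolynomial

/-- `B_k = z₁ + ∑_{i=1}^k A_i` for `1 ≤ k ≤ m−2`. -/
def qevB (m k : ℕ) : QevR m := qevZ1 m + ∑ i ∈ Finset.Icc 1 k, qevA m i

/-- The image of `B_k` in `K`. -/
def qevBK (m k : ℕ) : QevK m := algebraMap (QevR m) (QevK m) (qevB m k)

namespace QevAux
open ExteriorAlgebra

variable {K M : Type*} [Field K] [AddCommGroup M] [Module K M]

abbrev P (K : Type*) {M : Type*} [Field K] [AddCommGroup M] [Module K M] (L : List M) :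
  ExteriorAlgebra K M := (L.map (ι K)).prod

lemma anti (v w : M) : ι K v * ι K w = - (ι K w * ι K v) :=
  eq_neg_of_add_eq_zero_left (ExteriorAlgebra.ι_add_mul_swap v w)

lemma swapL (v : M) (L : List M) : ι K v * P K L = (-1 : K) ^ L.length • (P K L * ι K v) := by
  induction L with
  | nil => simp [P]
  | cons w L ih =>
    simp only [P, List.map_cons, List.prod_cons, List.length_cons] at *
    rw [← mul_assoc, anti, neg_mul, mul_assoc, ih, pow_succ]
    simp [mul_assoc]

lemma killL (v : M) (L : List M) (h : v ∈ L) : P K L * ι K v = 0 := by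
  obtain ⟨s, t, rfl⟩ := List.append_of_mem h
  have := swapL (K := K) v t
  have h2 : P K t * ι K v = (-1 : K) ^ t.length • (ι K v * P K t) := by
    rw [this, smul_smul, ← mul_pow]; simp
  have : P K (s ++ v :: t) = P K s * (ι K v * P K t) := by simp [P]
  rw [this, mul_assoc, mul_assoc, h2, mul_smul_comm, ← mul_assoc (ι K v)]
  simp

open CliffordAlgebra in
lemma contr_cons (d : Module.Dual K M) (v : M) (b : ExteriorAlgebra K M) :
    CliffordAlgebra.contractLeft d (ι K v * b) =
      d v • b - ι K v * CliffordAlgebra.contractLeft d b :=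
  CliffordAlgebra.contractLeft_ι_mul d v b

lemma contr_zero (d : Module.Dual K M) (L : List M) (h : ∀ v ∈ L, d v = 0) :
    CliffordAlgebra.contractLeft d (P K L) = 0 := by
  induction L with
  | nil => exact CliffordAlgebra.contractLeft_one _ d
  | cons w L ih =>
    have : P K (w :: L) = ι K w * P K L := by simp [P]
    rw [this, contr_cons, ih (fun v hv => h v (by simp [hv])), h w (by simp)]
    simp

lemma contr_pair (d : Module.Dual K M) (v w : M) (hv : d v = 0) (hw : d w = 0)
    (b : ExteriorAlgebra K M) :
    CliffordAlgebra.contractLeft d (ι K v * ι K w * b) =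
      ι K v * ι K w * CliffordAlgebra.contractLeft d b := by
  rw [mul_assoc, contr_cons, contr_cons, hv, hw]; simp [mul_assoc]

lemma contr_congr (d d' : Module.Dual K M) (L : List M) (h : ∀ v ∈ L, d v = d' v) :
    CliffordAlgebra.contractLeft d (P K L) = CliffordAlgebra.contractLeft d' (P K L) := by
  have := contr_zero (d - d') L (fun v hv => by simp [h v hv])
  rw [map_sub, LinearMap.sub_apply, sub_eq_zero] at this
  exact this

/-- subtract multiples of the head -/
lemma sub_head (c : M) (l : List ℕ) (f : ℕ → M) (t : ℕ → K) :
    ι K c * P K (l.map f) = ι K c * P K (l.map fun k => f k - t k • c) := by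
  induction l using List.reverseRecOn with
  | nil => rfl
  | append_singleton l k ih =>
    have h (g : ℕ → M) : P K ((l ++ [k]).map g) = P K (l.map g) * ι K (g k) := by simp [P]
    rw [h, h, ← mul_assoc, ← mul_assoc, ← ih, map_sub, mul_sub, map_smul, mul_smul_comm]
    have := killL (K := K) c (c :: l.map f) (by simp)
    simp only [P, List.map_cons, List.prod_cons] at this ⊢
    rw [this]; simp

lemma contr_head (d : Module.Dual K M) (c : M) (hc : d c ≠ 0) (l : List ℕ) (f : ℕ → M) :
    CliffordAlgebra.contractLeft d (ι K c * P K (l.map f)) =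
      d c • P K (l.map fun k => f k - (d (f k) / d c) • c) := by
  rw [sub_head c l f (fun k => d (f k) / d c), contr_cons, contr_zero, mul_zero, sub_zero]
  intro v hv
  obtain ⟨k, -, rfl⟩ := List.mem_map.1 hv
  simp [hc]

/-- replacement of A by B -/
lemma repl (c : M) (a b : ℕ → M) (j n : ℕ) 
    (hb : ∀ k, b k = c + ∑ i ∈ Finset.Icc 1 k, a i) :
    ι K c * P K ((List.Ico 1 (n+1)).map a) =
      ι K c * P K ((List.Ico 1 (n+1)).map fun k => if k < j then a k else b k) := by
  induction n with
  | zero => simp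
  | succ n ih =>
    rw [List.Ico.succ_top (by omega)]
    have h (g : ℕ → M) : P K ((List.Ico 1 (n+1) ++ [n+1]).map g) 
      = P K ((List.Ico 1 (n+1)).map g) * ι K (g (n+1)) := by simp [P]
    rw [h, h, ← mul_assoc, ← mul_assoc, ← ih]
    split_ifs with hlt
    · rfl
    · have key : ∀ v ∈ c :: (List.Ico 1 (n+1)).map a, 
          ι K c * P K ((List.Ico 1 (n+1)).map a) * ι K v = 0 := by
        intro v hv
        have := killL (K := K) v _ hv
        simpa only [P, List.map_cons, List.prod_cons] using this
      rw [hb, Finset.sum_Icc_succ_top (by omega), map_add, map_add, mul_add, mul_add, key c (by simp),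
        map_sum, Finset.mul_sum, Finset.sum_eq_zero, zero_add, zero_add]
      intro i hi
      rw [Finset.mem_Icc] at hi
      refine key _ (List.mem_cons_of_mem _ (List.mem_map.2 ⟨i, ?_, rfl⟩))
      rw [List.Ico.mem]; omega

lemma stage1 (δ : ℕ → Module.Dual K M) (x y : ℕ → K) (dx dy : ℕ → M) (n : ℕ) 
    (T : ExteriorAlgebra K M)
    (hT : ∀ i, 1 ≤ i → i < n → CliffordAlgebra.contractLeft (δ i) T = 0)
    (hx : ∀ i, 1 ≤ i → i < n → ∀ k, 1 ≤ k → k < n → δ i (dx k) = if k = i then x i else 0)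
    (hy : ∀ i, 1 ≤ i → i < n → ∀ k, 1 ≤ k → k < n → δ i (dy k) = if k = i then - y i else 0) :
    (List.Ico 1 n).foldr (fun i ω => CliffordAlgebra.contractLeft (δ i) ω)
      (((List.Ico 1 n).map (fun k => ι K (dx k) * ι K (dy k))).prod * T) =
    P K ((List.Ico 1 n).map fun k => x k • dy k + y k • dx k) * T := by
  induction n generalizing T with
  | zero => rw [List.Ico.eq_nil_of_le (by omega)]; simp [P]
  | succ n ih =>
    rcases Nat.eq_zero_or_pos n with rfl | hn
    · simp [P]
    rw [List.Ico.succ_top (by omega)]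
    have pass : ∀ l : List ℕ, (∀ k ∈ l, 1 ≤ k ∧ k < n) → ∀ b : ExteriorAlgebra K M, 
        CliffordAlgebra.contractLeft (δ n) ((l.map (fun k => ι K (dx k) * ι K (dy k))).prod * b) =
        (l.map (fun k => ι K (dx k) * ι K (dy k))).prod * CliffordAlgebra.contractLeft (δ n) b := by
      intro l hl b
      induction l with
      | nil => simp
      | cons k l ihl =>
        have hk := hl k (by simp)
        rw [List.map_cons, List.prod_cons, mul_assoc, contr_pair, ihl (fun k hk => hl k (by simp [hk])),
          mul_assoc (ι K (dx k) * _)]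
        · rw [hx n hn (by omega) k hk.1 (by omega), if_neg (by omega)]
        · rw [hy n hn (by omega) k hk.1 (by omega), if_neg (by omega)]
    rw [List.foldr_append, List.map_append, List.prod_append, mul_assoc]
    simp only [List.foldr_cons, List.foldr_nil]
    rw [pass _ (fun k hk => by rwa [List.Ico.mem] at hk)]
    have e : CliffordAlgebra.contractLeft (δ n) ((List.map (fun k => ι K (dx k) * ι K (dy k)) [n]).prod * T)
       = ι K (x n • dy n + y n • dx n) * T := by
      simp only [List.map_cons, List.map_nil, List.prod_cons, List.prod_nil, mul_one]
      rw [mul_assoc, contr_cons, contr_cons, hT n hn (by omega), hx n hn (by omega) n hn (by omega),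
        hy n hn (by omega) n hn (by omega)]
      simp [add_mul]
    rw [e, ih]
    · simp [P, mul_assoc]
    · intro i h1 h2
      rw [contr_cons, hT i h1 (by omega), map_add, map_smul, map_smul, hx i h1 (by omega) n hn (by omega),
        hy i h1 (by omega) n hn (by omega), if_neg (by omega), if_neg (by omega)]
      simp
    · intro i h1 h2 k h3 h4
      exact hx i h1 (by omega) k h3 (by omega)
    · intro i h1 h2 k h3 h4
      exact hy i h1 (by omega) k h3 (by omega)

lemma stage2 (n j : ℕ) (x y : ℕ → K) (dx dy : ℕ → M) (d d' : Module.Dual K M)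
    (a b : ℕ → M) (A : ℕ → K) (c : M) (z : K) 
    (ha : ∀ k, a k = x k • dy k + y k • dx k)
    (hb : ∀ k, b k = c + ∑ i ∈ Finset.Icc 1 k, a i)
    (hc : c = - ∑ i ∈ Finset.Icc 1 (n+2), a i)
    (hz : z = - ∑ i ∈ Finset.Icc 1 (n+2), A i) (hz0 : z ≠ 0) (hy0 : y (n+2) ≠ 0)
    (hd : ∀ k, 1 ≤ k → k ≤ n+2 → d (a k) = A k)
    (hd' : ∀ k, 1 ≤ k → k ≤ n+2 → d' (a k) = A k)
    (hdy : d (dy (n+2)) = 0) (hdy' : d' (dy (n+2)) = y (n+2)) :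
    CliffordAlgebra.contractLeft d' (CliffordAlgebra.contractLeft d 
      (P K ((List.Ico 1 (n+2)).map a) * (ι K (dx (n+2)) * ι K (dy (n+2))))) =
    z • P K ((List.Ico 1 (n+1) ++ [n+2]).map fun k => 
      (if k < j ∨ k = n+2 then a k else b k) - ((if k < j ∨ k = n+2 then A k else 
        z + ∑ i ∈ Finset.Icc 1 k, A i) / z) • c) := by
  set Q := P K ((List.Ico 1 (n+1)).map a) with hQ
  set X := ι K (dx (n+2))
  set Y := ι K (dy (n+2))
  set a1 := ι K (a (n+1)) with ha1
  have hlen : ((List.Ico 1 (n+1)).map a).length = n := by simp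
  have s0 : P K ((List.Ico 1 (n+2)).map a) = Q * a1 := by
    rw [List.Ico.succ_top (by omega)]; simp [P, Q, a1]
  have e1 : Q * a1 * (X * Y) = Y * (a1 * Q * X) := by
    have h1 := swapL (K := K) (a (n+1)) ((List.Ico 1 (n+1)).map a)
    have h2 := swapL (K := K) (dy (n+2)) ((List.Ico 1 (n+1)).map a)
    rw [hlen] at h1 h2
    rw [show a1 * Q = _ from h1]
    have h3 : Y * Q = (-1 : K)^n • (Q * Y) := h2
    have h4 : Y * a1 = - (a1 * Y) := anti _ _
    have h5 : X * Y = - (Y * X) := anti _ _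
    calc Q * a1 * (X * Y) = -(Q * (a1 * Y) * X) := by rw [h5]; simp only [mul_neg, mul_assoc]
      _ = Q * (Y * a1) * X := by rw [h4]; simp only [mul_neg, neg_mul]
      _ = (-1 : K)^n • ((-1 : K)^n • (Q * Y)) * (a1 * X) := by
        rw [smul_smul, ← mul_pow]; simp [mul_assoc]
      _ = (-1 : K)^n • (Y * Q) * (a1 * X) := by rw [h3]
      _ = Y * ((-1 : K)^n • (Q * a1) * X) := by
        simp only [smul_mul_assoc, mul_smul_comm, mul_assoc]
  have e2 : y (n+2) • (Y * (a1 * Q * X)) = Y * (a1 * Q * ι K (a (n+2))) := by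
    have hk := killL (K := K) (dy (n+2)) (dy (n+2) :: (a (n+1)) :: (List.Ico 1 (n+1)).map a) (by simp)
    simp only [P, List.map_cons, List.prod_cons] at hk
    have hk' : Y * (a1 * Q * Y) = 0 := by simpa only [mul_assoc] using hk
    rw [ha (n+2), map_add, map_smul, map_smul, mul_add, mul_add, mul_smul_comm, mul_smul_comm, 
      mul_smul_comm, mul_smul_comm, hk', smul_zero, zero_add]
  set L := (List.Ico 1 (n+1) ++ [n+2]).map a with hL
  have e3 : a1 * Q * ι K (a (n+2)) = P K (a (n+1) :: L) := by
    simp [L, P, Q, a1, mul_assoc]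
  have mem : ∀ v ∈ a (n+1) :: L, ∃ k, 1 ≤ k ∧ k ≤ n+2 ∧ v = a k := by
    intro v hv
    rw [List.mem_cons] at hv
    rcases hv with rfl | hv
    · exact ⟨n+1, by omega, by omega, rfl⟩
    · obtain ⟨k, hk, rfl⟩ := List.mem_map.1 hv
      refine ⟨k, ?_, ?_, rfl⟩ <;> simp [List.Ico.mem] at hk <;> omega
  have e4 : CliffordAlgebra.contractLeft d' (CliffordAlgebra.contractLeft d (P K (a (n+1) :: L))) = 0 := by
    rw [contr_congr d d']
    · exact CliffordAlgebra.contractLeft_contractLeft _ _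
    · intro v hv
      obtain ⟨k, h1, h2, rfl⟩ := mem v hv
      rw [hd k h1 h2, hd' k h1 h2]
  have e5 : P K (a (n+1) :: L) = - (ι K c * P K L) := by
    have hL' : P K L = Q * ι K (a (n+2)) := by simp [L, P, Q]
    have key : ∀ i, i ≠ n+1 → 1 ≤ i → i ≤ n+2 → ι K (a i) * P K L = 0 := by
      intro i h1 h2 h3
      rw [swapL, killL, smul_zero]
      refine List.mem_map.2 ⟨i, ?_, rfl⟩
      simp [List.Ico.mem]; omega
    rw [hc, map_neg, neg_mul, neg_neg, map_sum, Finset.sum_mul, Finset.sum_eq_single (n+1)]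
    · simp [P]
    · intro i hi hne
      rw [Finset.mem_Icc] at hi
      exact key i hne hi.1 hi.2
    · simp
  have e6 : ι K c * P K L = ι K c * P K ((List.Ico 1 (n+1) ++ [n+2]).map fun k => 
      (if k < j ∨ k = n+2 then a k else b k)) := by
    have h (g : ℕ → M) : P K ((List.Ico 1 (n+1) ++ [n+2]).map g) 
      = P K ((List.Ico 1 (n+1)).map g) * ι K (g (n+2)) := by simp [P]
    rw [hL, h, h, ← mul_assoc, ← mul_assoc, repl c a b j n hb, if_pos (by simp)]
    congr 3
    apply List.map_congr_left
    intro k hk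
    rw [List.Ico.mem] at hk
    have : k ≠ n+2 := by omega
    simp [this]
  have dc : d c = z := by
    rw [hc, hz, map_neg, map_sum]
    congr 1
    apply Finset.sum_congr rfl
    intro i hi
    rw [Finset.mem_Icc] at hi
    exact hd i hi.1 hi.2
  have main : CliffordAlgebra.contractLeft d' (CliffordAlgebra.contractLeft d 
      (y (n+2) • (Y * (a1 * Q * X)))) = y (n+2) • CliffordAlgebra.contractLeft d (ι K c * P K L) := by
    rw [e2, e3, contr_cons, hdy, zero_smul, zero_sub, map_neg, contr_cons, e4, hdy', e5]
    simp
  rw [s0, e1]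
  rw [map_smul, map_smul] at main
  have main' := smul_right_injective _ hy0 main
  rw [main', e6, contr_head d c (by rw [dc]; exact hz0), dc]
  congr 2
  apply List.map_congr_left
  intro k hk
  congr 3
  have hk' : 1 ≤ k ∧ k ≤ n + 2 := by
    simp [List.Ico.mem] at hk; omega
  split_ifs with h
  · exact hd k hk'.1 hk'.2
  · rw [hb, map_add, dc, map_sum]
    congr 1
    apply Finset.sum_congr rfl
    intro i hi
    rw [Finset.mem_Icc] at hi
    exact hd i hi.1 (by omega)

end QevAux

namespace QevAux
open ExteriorAlgebra

lemma prod_smul {K M : Type*} [Field K] [AddCommGroup M] [Module K M] (l : List ℕ) (s : ℕ → K)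
    (v : ℕ → M) : P K (l.map fun k => s k • v k) = (l.map s).prod • P K (l.map v) := by
  induction l with
  | nil => simp [P]
  | cons k l ih =>
    simp only [P, List.map_cons, List.prod_cons] at *
    rw [ih, map_smul, smul_mul_assoc, mul_smul_comm, smul_smul]

lemma prod_Ico {K : Type*} [CommMonoid K] (a b : ℕ) (f : ℕ → K) :
    ((List.Ico a b).map f).prod = ∏ k ∈ Finset.Ico a b, f k := by
  rfl

theorem abs {F K M : Type*} [Field F] [Field K] [Algebra F K] [AddCommGroup M] [Module K M]
    [Module F M] (D : Derivation F K M) (n j : ℕ) (hj : 1 ≤ j ∧ j ≤ n + 1)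
    (δ : ℕ → Module.Dual K M) (x y A B : ℕ → K) (z : K)
    (hA : ∀ k, A k = x k * y k) (hz : z = - ∑ i ∈ Finset.Icc 1 (n+2), A i)
    (hB : ∀ k, B k = z + ∑ i ∈ Finset.Icc 1 k, A i)
    (hz0 : z ≠ 0) (hA0 : ∀ k, 1 ≤ k → k ≤ n + 2 → A k ≠ 0)
    (hB0 : ∀ k, 1 ≤ k → k ≤ n → B k ≠ 0)
    (hx : ∀ i, 1 ≤ i → i < n + 2 → ∀ k, 1 ≤ k → k ≤ n + 2 →
      δ i (D (x k)) = if k = i then x i else 0)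
    (hy : ∀ i, 1 ≤ i → i < n + 2 → ∀ k, 1 ≤ k → k ≤ n + 2 →
      δ i (D (y k)) = if k = i then - y i else 0)
    (hmx : ∀ k, 1 ≤ k → k ≤ n + 2 → δ (n+2) (D (x k)) = if k = n+2 then x k else 0)
    (hmy : ∀ k, 1 ≤ k → k ≤ n + 2 → δ (n+2) (D (y k)) = if k = n+2 then 0 else y k)
    (hpx : ∀ k, 1 ≤ k → k ≤ n + 2 → δ (n+3) (D (x k)) = 0)
    (hpy : ∀ k, 1 ≤ k → k ≤ n + 2 → δ (n+3) (D (y k)) = y k) :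
    ((n + 3) :: (n + 2) :: List.Ico 1 (n+2)).foldr
      (fun i ω => CliffordAlgebra.contractLeft (δ i) ω)
        (((z * (∏ k ∈ Finset.Ico 1 j, A k) *
            (∏ k ∈ Finset.Icc j n, B k) * A (n+2))⁻¹) •
          ((List.Ico 1 (n+3)).map (fun k => ι K (D (x k)) * ι K (D (y k)))).prod) =
      (((List.Ico 1 j).map (fun k => ι K ((A k / z)⁻¹ • D (A k / z)))).prod) *
        (((List.Ico j (n+1)).map (fun k => ι K ((B k / z)⁻¹ • D (B k / z)))).prod) *
        ι K ((A (n+2) / z)⁻¹ • D (A (n+2) / z)) := by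
  set s : K := (z * (∏ k ∈ Finset.Ico 1 j, A k) *
            (∏ k ∈ Finset.Icc j n, B k) * A (n+2))⁻¹ with hs
  have hfs : ∀ (l : List ℕ) (w : ExteriorAlgebra K M),
      l.foldr (fun i ω => CliffordAlgebra.contractLeft (δ i) ω) (s • w) =
      s • l.foldr (fun i ω => CliffordAlgebra.contractLeft (δ i) ω) w := by
    intro l w
    induction l with
    | nil => rfl
    | cons i l ih => rw [List.foldr_cons, ih, map_smul, List.foldr_cons]
  have hDA : ∀ k, D (A k) = x k • D (y k) + y k • D (x k) := by
    intro k; rw [hA, D.leibniz]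
  have hDz : D z = - ∑ i ∈ Finset.Icc 1 (n+2), D (A i) := by
    rw [hz, map_neg, map_sum]
  have hDB : ∀ k, D (B k) = D z + ∑ i ∈ Finset.Icc 1 k, D (A i) := by
    intro k; rw [hB, map_add, map_sum]
  rw [hfs, List.Ico.succ_top (show 1 ≤ n + 2 by omega), List.map_append, List.prod_append,
    List.foldr_cons, List.foldr_cons]
  rw [stage1 δ x y (fun k => D (x k)) (fun k => D (y k)) (n+2)]
  rotate_left
  · intro i h1 h2
    simp only [List.map_cons, List.map_nil, List.prod_cons, List.prod_nil, mul_one]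
    rw [contr_cons, hx i h1 h2 _ (by omega) le_rfl, if_neg (by omega)]
    have h3 := contr_cons (δ i) (D (y (n+2))) 1
    rw [mul_one] at h3
    rw [h3, hy i h1 h2 _ (by omega) le_rfl, if_neg (by omega)]
    have h4 : CliffordAlgebra.contractLeft (δ i) (1 : ExteriorAlgebra K M) = 0 :=
      CliffordAlgebra.contractLeft_one _ (δ i)
    rw [h4]
    simp
  · intro i h1 h2 k h3 h4
    exact hx i h1 h2 k h3 h4.le
  · intro i h1 h2 k h3 h4
    exact hy i h1 h2 k h3 h4.le
  have hy0 : y (n+2) ≠ 0 := by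
    intro h
    exact hA0 (n+2) (by omega) le_rfl (by rw [hA, h, mul_zero])
  have st := stage2 n j x y (fun k => D (x k)) (fun k => D (y k)) (δ (n+2)) (δ (n+3))
    (fun k => D (A k)) (fun k => D (B k)) A (D z) z hDA hDB hDz hz hz0 hy0
    (by
      intro k h1 h2
      rw [hDA, map_add, map_smul, map_smul, hmx k h1 h2, hmy k h1 h2, hA]
      split_ifs <;> simp [mul_comm])
    (by
      intro k h1 h2
      rw [hDA, map_add, map_smul, map_smul, hpx k h1 h2, hpy k h1 h2, hA]
      simp)
    (by simpa using hmy (n+2) (by omega) le_rfl)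
    (by simpa using hpy (n+2) (by omega) le_rfl)
  simp only [List.map_cons, List.map_nil, List.prod_cons, List.prod_nil, mul_one]
  simp only [← hDA]
  rw [st, smul_smul]
  set C : ℕ → K := fun k => if k < j ∨ k = n+2 then A k else B k with hC
  have hC0 : ∀ k ∈ List.Ico 1 (n+1) ++ [n+2], C k ≠ 0 := by
    intro k hk
    simp only [List.mem_append, List.Ico.mem, List.mem_singleton] at hk
    simp only [hC]
    split_ifs with h
    · exact hA0 k (by omega) (by omega)
    · exact hB0 k (by omega) (by omega)
  have hdl : ∀ k ∈ List.Ico 1 (n+1) ++ [n+2], (C k / z)⁻¹ • D (C k / z) =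
      (C k)⁻¹ • (D (C k) - (C k / z) • D z) := by
    intro k hk
    have h0 := hC0 k hk
    rw [D.leibniz_div, smul_smul, smul_sub, smul_sub, smul_smul, smul_smul, smul_smul]
    congr 2 <;> field_simp
  have rhs : (((List.Ico 1 j).map (fun k => ι K ((A k / z)⁻¹ • D (A k / z)))).prod) *
        (((List.Ico j (n+1)).map (fun k => ι K ((B k / z)⁻¹ • D (B k / z)))).prod) *
        ι K ((A (n+2) / z)⁻¹ • D (A (n+2) / z)) =
      P K ((List.Ico 1 (n+1) ++ [n+2]).map fun k => (C k / z)⁻¹ • D (C k / z)) := by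
    rw [← List.Ico.append_consecutive hj.1 hj.2]
    simp only [P, List.map_append, List.prod_append, List.map_map, List.map_cons, List.map_nil,
      List.prod_singleton]
    congr 1
    · congr 1
      · congr 1
        apply List.map_congr_left
        intro k hk
        rw [List.Ico.mem] at hk
        have : C k = A k := if_pos (Or.inl hk.2)
        simp [this]
      · congr 1
        apply List.map_congr_left
        intro k hk
        rw [List.Ico.mem] at hk
        have : C k = B k := if_neg (by omega)
        simp [this]
    · have : C (n+2) = A (n+2) := if_pos (Or.inr rfl)
      rw [this]
  rw [rhs, List.map_congr_left hdl, prod_smul]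
  congr 1
  · rw [← List.Ico.append_consecutive hj.1 hj.2]
    simp only [List.map_append, List.prod_append, List.map_cons, List.map_nil,
      List.prod_singleton]
    rw [prod_Ico, prod_Ico]
    have h1 : ∏ k ∈ Finset.Ico 1 j, (C k)⁻¹ = (∏ k ∈ Finset.Ico 1 j, A k)⁻¹ := by
      rw [← Finset.prod_inv_distrib]
      apply Finset.prod_congr rfl
      intro k hk
      rw [Finset.mem_Ico] at hk
      have : C k = A k := if_pos (Or.inl hk.2)
      rw [this]
    have h2 : ∏ k ∈ Finset.Ico j (n+1), (C k)⁻¹ = (∏ k ∈ Finset.Icc j n, B k)⁻¹ := by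
      rw [← Finset.prod_inv_distrib]
      apply Finset.prod_congr rfl
      intro k hk
      rw [Finset.mem_Ico] at hk
      have : C k = B k := if_neg (by omega)
      rw [this]
    have h3 : C (n+2) = A (n+2) := if_pos (Or.inr rfl)
    rw [h1, h2, h3, hs, mul_inv, mul_inv, mul_inv]
    field_simp
  · congr 1
    apply List.map_congr_left
    intro k hk
    simp only [hC]
    split_ifs with h
    · rfl
    · rw [← hB]

lemma omega_pairs {E : Type*} [Monoid E] (f : ℕ → E) (m : ℕ) :
    ((List.Ico 2 (2 * m + 2)).map f).prod =
      ((List.Ico 1 (m + 1)).map fun k => f (2 * k) * f (2 * k + 1)).prod := by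
  induction m with
  | zero => simp
  | succ m ih =>
    rw [show 2 * (m + 1) + 2 = (2 * m + 2 + 1) + 1 by ring, List.Ico.succ_top (by omega),
      List.Ico.succ_top (by omega), List.Ico.succ_top (n := 1) (by omega)]
    simp only [List.map_append, List.prod_append, ih, List.map_cons, List.map_nil,
      List.prod_singleton, mul_assoc]
    rfl

lemma V_z (m i k : ℕ) (hk : 2 ≤ k ∧ k ≤ 2 * m + 1) : qevV m i (qevZ m k) =
    if i = m then (if k = 2 * m then qevZ m k
      else if k % 2 = 1 ∧ k ≤ 2 * m - 1 then qevZ m k else 0)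
    else if i = m + 1 then (if k = 2 * m + 1 then qevZ m k
      else if k % 2 = 1 ∧ k ≤ 2 * m - 1 then qevZ m k else 0)
    else (if k = 2 * i then qevZ m k
      else if k = 2 * i + 1 then -(qevZ m k) else 0) := by
  have h : qevZ m k = X ⟨k, hk⟩ := by simp [qevZ, hk]
  conv_lhs => rw [h]
  unfold qevV
  split_ifs <;> rw [MvPolynomial.mkDerivation_X] <;> simp_all

/-- evaluation at the point with the pair `r` equal to one and the others zero -/
def ev (m r : ℕ) : QevR m →+* ℂ :=
  MvPolynomial.eval (fun s => if s.1 = 2 * r ∨ s.1 = 2 * r + 1 then 1 else 0)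

lemma ev_A (m r k : ℕ) (hk : 1 ≤ k ∧ k ≤ m) : ev m r (qevA m k) = if k = r then 1 else 0 := by
  have h1 : 2 ≤ 2 * k ∧ 2 * k ≤ 2 * m + 1 := by omega
  have h2 : 2 ≤ 2 * k + 1 ∧ 2 * k + 1 ≤ 2 * m + 1 := by omega
  unfold qevA qevZ ev
  rw [dif_pos h1, dif_pos h2, map_mul, MvPolynomial.eval_X, MvPolynomial.eval_X]
  by_cases h : k = r
  · simp [h]
  · rw [if_neg (by simp only []; omega), if_neg h, zero_mul]

lemma A_ne (m k : ℕ) (hk : 1 ≤ k ∧ k ≤ m) : qevA m k ≠ 0 := by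
  intro h
  have := ev_A m k k hk
  rw [h] at this
  simp at this

lemma ev_sum (m k : ℕ) (hk : k ≤ m) (hm : 1 ≤ m) :
    ev m m (∑ i ∈ Finset.Icc 1 k, qevA m i) = if k = m then 1 else 0 := by
  rw [map_sum, Finset.sum_congr rfl (g := fun i => if i = m then (1 : ℂ) else 0)]
  · rw [Finset.sum_ite_eq']
    congr 1
    simp only [Finset.mem_Icc, eq_iff_iff]
    omega
  · intro i hi
    rw [Finset.mem_Icc] at hi
    exact ev_A m m i (by omega)

lemma Z1_ne (m : ℕ) (hm : 1 ≤ m) : qevZ1 m ≠ 0 := by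
  intro h
  have := ev_sum m m le_rfl hm
  rw [qevZ1, neg_eq_zero] at h
  rw [h] at this
  simp at this

lemma B_ne (m k : ℕ) (hm : 1 ≤ m) (hk : k < m) : qevB m k ≠ 0 := by
  intro h
  have h1 := ev_sum m m le_rfl hm
  have h2 := ev_sum m k hk.le hm
  have h3 : ev m m (qevB m k) = 0 := by rw [h, map_zero]
  rw [qevB, qevZ1, map_add, map_neg, h1, h2, if_pos rfl, if_neg (by omega)] at h3
  simp at h3

end QevAux

/-- Proposition 3.9 of the paper: for every `1 ≤ j ≤ m−1`,
`ι_{V_{m+1}} ι_{V_m} ι_{V₁} ⋯ ι_{V_{m−1}} ((z₁A₁⋯A_{j−1}·B_j⋯B_{m−2}·A_m)⁻¹ Ω)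
 = dlog g₁ ∧ ⋯ ∧ dlog g_{m−2} ∧ dlog g_m`
with `g_k = A_k/z₁` for `1 ≤ k ≤ j−1`, `g_k = B_k/z₁` for `j ≤ k ≤ m−2` and
`g_m = A_m/z₁`, where the `ι_{V_i}` are the (unique) extensions of the
derivations `V_i` to `K`. -/
theorem qev_general_contraction (m : ℕ) (hm : 2 ≤ m) (j : ℕ) (hj : 1 ≤ j ∧ j ≤ m - 1)
    (W : ℕ → Derivation ℂ (QevK m) (QevK m))
    (hW : ∀ i, ∀ g : QevR m,
      W i (algebraMap (QevR m) (QevK m) g) = algebraMap (QevR m) (QevK m) (qevV m i g)) :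
    ((m + 1) :: m :: List.Ico 1 m).foldr (fun i ω => contrDer (W i) ω)
        (((qevZ1K m * (∏ k ∈ Finset.Ico 1 j, qevAK m k) *
            (∏ k ∈ Finset.Icc j (m - 2), qevBK m k) * qevAK m m)⁻¹) • qevOmegaK m) =
      (((List.Ico 1 j).map (fun k =>
          ExteriorAlgebra.ι (QevK m) (dlog m (qevAK m k / qevZ1K m)))).prod) *
        (((List.Ico j (m - 1)).map (fun k =>
          ExteriorAlgebra.ι (QevK m) (dlog m (qevBK m k / qevZ1K m)))).prod) *
        ExteriorAlgebra.ι (QevK m) (dlog m (qevAK m m / qevZ1K m)) := by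
  obtain ⟨n, rfl⟩ : ∃ n, m = n + 2 := ⟨m - 2, by omega⟩
  have hinj := IsFractionRing.injective (QevR (n+2)) (QevK (n+2))
  have hne : ∀ r : QevR (n+2), r ≠ 0 → algebraMap (QevR (n+2)) (QevK (n+2)) r ≠ 0 := by
    intro r hr h
    exact hr (hinj (by rw [h, map_zero]))
  have hδ : ∀ i (k : ℕ), (KaehlerDifferential.linearMapEquivDerivation ℂ (QevK (n+2))).symm (W i)
      (KaehlerDifferential.D ℂ (QevK (n+2)) (algebraMap (QevR (n+2)) (QevK (n+2)) (qevZ (n+2) k))) =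
      algebraMap (QevR (n+2)) (QevK (n+2)) (qevV (n+2) i (qevZ (n+2) k)) := by
    intro i k
    rw [← hW]
    exact Derivation.liftKaehlerDifferential_comp_D (W i) _
  have key := QevAux.abs (KaehlerDifferential.D ℂ (QevK (n+2))) n j ⟨hj.1, by omega⟩
    (fun i => (KaehlerDifferential.linearMapEquivDerivation ℂ (QevK (n+2))).symm (W i))
    (fun k => algebraMap (QevR (n+2)) (QevK (n+2)) (qevZ (n+2) (2 * k)))
    (fun k => algebraMap (QevR (n+2)) (QevK (n+2)) (qevZ (n+2) (2 * k + 1)))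
    (qevAK (n+2)) (qevBK (n+2)) (qevZ1K (n+2))
    (fun k => by simp only [qevAK, qevA, map_mul])
    (by simp only [qevZ1K, qevZ1, map_neg, map_sum, qevAK])
    (fun k => by simp only [qevBK, qevB, map_add, map_sum, qevAK, qevZ1K])
    (hne _ (QevAux.Z1_ne _ (by omega)))
    (fun k h1 h2 => hne _ (QevAux.A_ne _ _ ⟨h1, h2⟩))
    (fun k h1 h2 => hne _ (QevAux.B_ne _ _ (by omega) (by omega)))
    (by
      intro i h1 h2 k h3 h4
      rw [hδ, QevAux.V_z _ _ _ (by omega), if_neg (by omega), if_neg (by omega)]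
      by_cases h : k = i
      · subst h; rw [if_pos rfl, if_pos rfl]
      · rw [if_neg (by omega), if_neg (by omega), if_neg h, map_zero])
    (by
      intro i h1 h2 k h3 h4
      rw [hδ, QevAux.V_z _ _ _ (by omega), if_neg (by omega), if_neg (by omega)]
      by_cases h : k = i
      · subst h; rw [if_neg (by omega), if_pos rfl, if_pos rfl, map_neg]
      · rw [if_neg (by omega), if_neg (by omega), if_neg h, map_zero])
    (by
      intro k h3 h4
      rw [hδ, QevAux.V_z _ _ _ (by omega), if_pos rfl]
      by_cases h : k = n + 2
      · rw [if_pos (by omega), if_pos h]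
      · rw [if_neg (by omega), if_neg (by omega), if_neg h, map_zero])
    (by
      intro k h3 h4
      rw [hδ, QevAux.V_z _ _ _ (by omega), if_pos rfl]
      by_cases h : k = n + 2
      · rw [if_neg (by omega), if_neg (by omega), if_pos h, map_zero]
      · rw [if_neg (by omega), if_pos (by omega), if_neg h])
    (by
      intro k h3 h4
      rw [hδ, QevAux.V_z _ _ _ (by omega), if_neg (by omega), if_pos rfl, if_neg (by omega),
        if_neg (by omega), map_zero])
    (by
      intro k h3 h4
      rw [hδ, QevAux.V_z _ _ _ (by omega), if_neg (by omega), if_pos rfl]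
      by_cases h : k = n + 2
      · rw [if_pos (by omega)]
      · rw [if_neg (by omega), if_pos (by omega)])
  have hO : qevOmegaK (n+2) = _ := QevAux.omega_pairs _ (n+2)
  rw [hO]
  exact key

end
end
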